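/- Let E be a field, E' a finite field extension of E, and E'' a field extension of E such that the number of E-algebra homomorphisms from E' to E'' equals the degree [E' : E], and let A be a commutative E''-algebra. Let M be a module over E' ⊗_E A. For each η ∈ Hom_{E-alg}(E', E''), regard A as an (E' ⊗_E A)-algebra via a ⊗ b ↦ η(a)·b. Then: (i) the canonical map M → ∏_{η} (M ⊗_{E' ⊗_E A} A) is bijective; (ii) writing e_η for the idempotent of E' ⊗_E A corresponding to the η-th factor under the ring isomorphism E' ⊗_E A ≅ ∏_η A, one has M = ⊕_η e_η·M, and for each η the composite e_η·M ↪ M ↠ M ⊗_{E' ⊗_E A, η} A of the inclusion with the base-change projection is an isomorphism. -/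

import Mathlib

/-!
A module `M` over a ring `R ≅ ∏ i, B i` decomposes because `M ≅ M ⊗[R] R ≅ ∏ i, M ⊗[R] B i`, and
multiplication by the idempotent `e i` cuts out the `i`-th factor. For `R = E' ⊗[E] A` and
`B η = A`, the elements `e η` make the `A`-linear map `E' ⊗[E] A → ∏ η, A` surjective. Its source is
generated over `A` by `[E' : E]` elements and its target is free on the same number of generators,
and a surjective endomorphism of a finite free module is injective; so the map is bijective.
-/

open TensorProduct

section

variable (E E' E'' : Type) [Field E] [Field E'] [Field E'']
  [Algebra E E'] [Algebra E E''] [FiniteDimensional E E']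
  (A : Type) [CommRing A] [Algebra E A] [Algebra E'' A] [IsScalarTower E E'' A]

/-- The ring homomorphism `E' ⊗_E A → A` attached to an embedding `η : E' →ₐ[E] E''`,
sending `a ⊗ b` to `η(a)·b` (using the `E''`-algebra structure of `A`). -/
noncomputable def etaHom (η : E' →ₐ[E] E'') : (E' ⊗[E] A) →+* A :=
  (Algebra.TensorProduct.productMap
    ((IsScalarTower.toAlgHom E E'' A).comp η) (AlgHom.id E A)).toRingHom

/-- `A` regarded as an `(E' ⊗_E A)`-algebra (in particular module) via `η`. -/
def EtaA (_η : E' →ₐ[E] E'') : Type := A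

instance (η : E' →ₐ[E] E'') : CommRing (EtaA E E' E'' A η) :=
  inferInstanceAs (CommRing A)

instance (η : E' →ₐ[E] E'') : Module A (EtaA E E' E'' A η) :=
  inferInstanceAs (Module A A)

noncomputable instance (η : E' →ₐ[E] E'') : Module (E' ⊗[E] A) (EtaA E E' E'' A η) :=
  Module.compHom (EtaA E E' E'' A η) (etaHom E E' E'' A η)

end

section IdempotentDecomposition

variable {R M ι : Type*} [CommRing R] [AddCommGroup M] [Module R M] {e : ι → R}

theorem iSupIndep_range_lsmul (he : OrthogonalIdempotents e) :
    iSupIndep fun i => LinearMap.range (LinearMap.lsmul R M (e i)) := by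
  intro i
  have hle : ⨆ (j) (_ : j ≠ i), LinearMap.range (LinearMap.lsmul R M (e j)) ≤
      LinearMap.ker (LinearMap.lsmul R M (e i)) := by
    refine iSup₂_le fun j hji => ?_
    rintro _ ⟨m, rfl⟩
    simp [smul_smul, he.ortho hji]
  have hidem : IsIdempotentElem (LinearMap.lsmul R M (e i)) :=
    (he.idem i).map (Algebra.lsmul R R M)
  exact (LinearMap.IsIdempotentElem.isCompl hidem).disjoint.mono_right hle

theorem isInternal_range_lsmul [Fintype ι] [DecidableEq ι]
    (he : CompleteOrthogonalIdempotents e) :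
    DirectSum.IsInternal fun i => LinearMap.range (LinearMap.lsmul R M (e i)) := by
  refine DirectSum.isInternal_submodule_of_iSupIndep_of_iSup_eq_top
    (iSupIndep_range_lsmul he.toOrthogonalIdempotents) (eq_top_iff.mpr fun m _ => ?_)
  rw [← one_smul R m, ← he.complete, Finset.sum_smul]
  exact Submodule.sum_mem _ fun i _ => Submodule.mem_iSup_of_mem i ⟨m, rfl⟩

end IdempotentDecomposition

section ProductOfAlgebras

variable {R M ι : Type*} {B : ι → Type*} [CommRing R] [AddCommGroup M] [Module R M]
  [∀ i, CommRing (B i)] [∀ i, Algebra R (B i)]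

theorem bijective_tmul_one {S : Type*} [CommRing S] [Algebra R S]
    (h : Function.Bijective (algebraMap R S)) :
    Function.Bijective fun m : M => m ⊗ₜ[R] (1 : S) := by
  let f := (TensorProduct.rid R M).symm ≪≫ₗ
    (LinearEquiv.ofBijective (Algebra.linearMap R S) h).lTensor M
  convert f.bijective with m
  change m ⊗ₜ[R] 1 = m ⊗ₜ[R] algebraMap R S 1
  rw [map_one]

theorem bijective_tmul_one_pi [Finite ι] (h : Function.Bijective (algebraMap R (∀ i, B i))) :
    Function.Bijective fun (m : M) i => m ⊗ₜ[R] (1 : B i) := by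
  classical
  have := Fintype.ofFinite ι
  exact (TensorProduct.piRight R R M B).bijective.comp (bijective_tmul_one h)

variable [DecidableEq ι] {e : ι → R}

theorem completeOrthogonalIdempotents_of_algebraMap_eq_ite [Fintype ι]
    (h : Function.Injective (algebraMap R (∀ i, B i)))
    (he : ∀ i j, algebraMap R (B j) (e i) = if j = i then 1 else 0) :
    CompleteOrthogonalIdempotents e := by
  rw [← CompleteOrthogonalIdempotents.map_injective_iff (algebraMap R (∀ i, B i)) h]
  convert CompleteOrthogonalIdempotents.single B with i
  ext j
  obtain rfl | hji := eq_or_ne j i <;> simp [*]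

theorem smul_tmul_one_of_algebraMap_eq_ite
    (he : ∀ i j, algebraMap R (B j) (e i) = if j = i then 1 else 0) (i j : ι) (m : M) :
    (e i • m) ⊗ₜ[R] (1 : B j) = if j = i then m ⊗ₜ[R] 1 else 0 := by
  rw [TensorProduct.smul_tmul, ← Algebra.algebraMap_eq_smul_one, he, TensorProduct.tmul_ite]

theorem bijective_range_lsmul_tmul_one [Finite ι]
    (h : Function.Bijective (algebraMap R (∀ i, B i)))
    (he : ∀ i j, algebraMap R (B j) (e i) = if j = i then 1 else 0) (i : ι) :
    Function.Bijective fun x : LinearMap.range (LinearMap.lsmul R M (e i)) =>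
      (x : M) ⊗ₜ[R] (1 : B i) := by
  have hpi := bijective_tmul_one_pi (M := M) h
  constructor
  · rintro ⟨_, m, rfl⟩ ⟨_, m', rfl⟩ hmm'
    refine Subtype.ext (hpi.injective (funext fun j => ?_))
    obtain rfl | hji := eq_or_ne j i
    · exact hmm'
    · simp [smul_tmul_one_of_algebraMap_eq_ite he, hji]
  · intro t
    obtain ⟨m, rfl⟩ := (Function.surjective_eval i).comp hpi.surjective t
    exact ⟨⟨e i • m, m, rfl⟩, by simp [smul_tmul_one_of_algebraMap_eq_ite he]⟩

theorem surjective_algebraMap_pi [Finite ι] (hB : ∀ i, Function.Surjective (algebraMap R (B i)))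
    (he : ∀ i j, algebraMap R (B j) (e i) = if j = i then 1 else 0) :
    Function.Surjective (algebraMap R (∀ i, B i)) := by
  have := Fintype.ofFinite ι
  intro y
  choose r hr using fun i => hB i (y i)
  refine ⟨∑ i, r i * e i, funext fun j => ?_⟩
  simp [he, hr]

end ProductOfAlgebras

section SplitAlgebra

variable {A R ι : Type*} {B : ι → Type*} [CommRing A] [CommRing R] [Algebra A R] [Finite ι]
  [∀ i, CommRing (B i)] [∀ i, Algebra A (B i)] [∀ i, Algebra R (B i)]
  [∀ i, IsScalarTower A R (B i)] {v : ι → R}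

theorem injective_algebraMap_pi_of_surjective (hv : Submodule.span A (Set.range v) = ⊤)
    (hB : ∀ i, Function.Bijective (algebraMap A (B i)))
    (hsurj : Function.Surjective (algebraMap R (∀ i, B i))) :
    Function.Injective (algebraMap R (∀ i, B i)) := by
  have := Fintype.ofFinite ι
  let generators : (ι → A) →ₗ[A] R := Fintype.linearCombination A v
  have hgen : Function.Surjective generators := by
    rwa [← LinearMap.range_eq_top, Fintype.range_linearCombination]
  let toPi : R →ₗ[A] ∀ i, B i := (IsScalarTower.toAlgHom A R (∀ i, B i)).toLinearMap
  let coords : (ι → A) ≃ₗ[A] ∀ i, B i :=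
    LinearEquiv.piCongrRight fun i => LinearEquiv.ofBijective (Algebra.linearMap A (B i)) (hB i)
  have : Module.Finite A (∀ i, B i) := .equiv coords
  have hinj : Function.Injective (toPi ∘ generators) :=
    OrzechProperty.injective_of_surjective_of_injective coords.toLinearMap (toPi ∘ₗ generators)
      coords.injective (hsurj.comp hgen)
  exact hinj.of_comp_right hgen

/-- `R` plays the role of `E' ⊗[E] A`, and `B i` that of `A` regarded as an `R`-algebra through the
`i`-th embedding. -/
theorem stmt4_general {M : Type*} [AddCommGroup M] [Module R M] [DecidableEq ι]
    (hv : Submodule.span A (Set.range v) = ⊤)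
    (hB : ∀ i, Function.Bijective (algebraMap A (B i))) (e : ι → R)
    (he : ∀ i j, algebraMap R (B j) (e i) = if j = i then 1 else 0) :
    Function.Bijective (fun (m : M) i => m ⊗ₜ[R] (1 : B i)) ∧
    DirectSum.IsInternal (fun i => LinearMap.range (LinearMap.lsmul R M (e i))) ∧
    ∀ i, Function.Bijective
      fun x : LinearMap.range (LinearMap.lsmul R M (e i)) => (x : M) ⊗ₜ[R] (1 : B i) := by
  have := Fintype.ofFinite ι
  have hsurj : Function.Surjective (algebraMap R (∀ i, B i)) := by
    refine surjective_algebraMap_pi (fun i => .of_comp (g := algebraMap A R) ?_) he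
    rw [← RingHom.coe_comp, ← IsScalarTower.algebraMap_eq]
    exact (hB i).surjective
  have hbij : Function.Bijective (algebraMap R (∀ i, B i)) :=
    ⟨injective_algebraMap_pi_of_surjective hv hB hsurj, hsurj⟩
  exact ⟨bijective_tmul_one_pi hbij,
    isInternal_range_lsmul
      (completeOrthogonalIdempotents_of_algebraMap_eq_ite hbij.injective he),
    bijective_range_lsmul_tmul_one hbij he⟩

end SplitAlgebra

attribute [local instance] Algebra.TensorProduct.rightAlgebra

theorem span_range_tmul_one {R S A ι : Type*} [CommRing R] [CommRing S] [CommRing A]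
    [Algebra R S] [Algebra R A] {v : ι → S} (hv : Submodule.span R (Set.range v) = ⊤) :
    Submodule.span A (Set.range fun i => v i ⊗ₜ[R] (1 : A)) = ⊤ := by
  let swap : A ⊗[R] S ≃ₗ[A] S ⊗[R] A := (Algebra.TensorProduct.commRight R A S).toLinearEquiv
  have hspan : Submodule.span A (TensorProduct.mk R A S 1 '' Set.range v) = ⊤ := by
    rw [← Submodule.baseChange_span, hv, Submodule.baseChange_top]
  have hrange : (Set.range fun i => v i ⊗ₜ[R] (1 : A)) =
      swap '' (TensorProduct.mk R A S 1 '' Set.range v) := by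
    rw [← Set.range_comp, ← Set.range_comp]
    rfl
  rw [hrange, ← LinearEquiv.coe_coe, ← Submodule.map_span, hspan, Submodule.map_top,
    LinearEquiv.range]

namespace EtaA

variable {E E' E'' : Type} [Field E] [Field E'] [Field E'']
  [Algebra E E'] [Algebra E E'']
  {A : Type} [CommRing A] [Algebra E A] [Algebra E'' A] [IsScalarTower E E'' A]
  (η : E' →ₐ[E] E'')

instance : Algebra A (EtaA E E' E'' A η) :=
  inferInstanceAs (Algebra A A)

-- The scalar action is left to inference so that the underlying module structure is
-- definitionally the one given by `Module.compHom` above.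
noncomputable instance : Algebra (E' ⊗[E] A) (EtaA E E' E'' A η) where
  algebraMap := etaHom E E' E'' A η
  commutes' _ _ := mul_comm _ _
  smul_def' _ _ := rfl

instance : IsScalarTower A (E' ⊗[E] A) (EtaA E E' E'' A η) :=
  .of_algebraMap_eq fun a =>
    (Algebra.TensorProduct.productMap_right_apply
      ((IsScalarTower.toAlgHom E E'' A).comp η) (AlgHom.id E A) a).symm

end EtaA

/-- In the setting of Statement 3, let `M` be a module over `E' ⊗_E A`.  Then:
(i) the canonical map `M → ∏_η (M ⊗_{E' ⊗_E A} A)` (with `A` regarded as an `(E' ⊗_E A)`-algebra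
via `η`) is bijective; (ii) writing `e_η` for the idempotent of `E' ⊗_E A` corresponding to the
`η`-th factor under the ring isomorphism `E' ⊗_E A ≅ ∏_η A`, one has `M = ⊕_η e_η·M`, and for
each `η` the composite `e_η·M ↪ M ↠ M ⊗_{E' ⊗_E A, η} A` is an isomorphism. -/
theorem stmt4 (E E' E'' : Type) [Field E] [Field E'] [Field E'']
    [Algebra E E'] [Algebra E E''] [FiniteDimensional E E']
    [DecidableEq (E' →ₐ[E] E'')]
    (A : Type) [CommRing A] [Algebra E A] [Algebra E'' A] [IsScalarTower E E'' A]
    (hcard : Nat.card (E' →ₐ[E] E'') = Module.finrank E E')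
    (M : Type) [AddCommGroup M] [Module (E' ⊗[E] A) M]
    (e : (E' →ₐ[E] E'') → (E' ⊗[E] A))
    (he : ∀ η η' : E' →ₐ[E] E'',
      etaHom E E' E'' A η' (e η) = if η' = η then 1 else 0) :
    Function.Bijective (fun m : M => fun η : E' →ₐ[E] E'' =>
      (m ⊗ₜ[E' ⊗[E] A] (1 : EtaA E E' E'' A η) :
        M ⊗[E' ⊗[E] A] (EtaA E E' E'' A η))) ∧
    DirectSum.IsInternal (fun η : E' →ₐ[E] E'' =>
      LinearMap.range (LinearMap.lsmul (E' ⊗[E] A) M (e η))) ∧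
    ∀ η : E' →ₐ[E] E'',
      Function.Bijective
        (fun x : LinearMap.range (LinearMap.lsmul (E' ⊗[E] A) M (e η)) =>
          ((x : M) ⊗ₜ[E' ⊗[E] A] (1 : EtaA E E' E'' A η) :
            M ⊗[E' ⊗[E] A] (EtaA E E' E'' A η))) := by
  let b := (Module.finBasis E E').reindex (Finite.equivFinOfCardEq hcard).symm
  exact stmt4_general (span_range_tmul_one b.span_eq) (fun _ => Function.bijective_id) e he
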